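/- arXiv:1001.4292 — 2 statements merged into one kernel-verified Lean document; each statement's English description precedes it below -/
import Mathlib

section
/- Let V be a real inner product space, let J and J' be orthogonal complex structures on V, and let x be a real number with x² < 1 such that J' ∘ J + J ∘ J' = -2x • id. Then I := (1 - x²)^(-1/2) • (J' - x J) is an orthogonal complex structure on V that anticommutes with J (i.e. I ∘ J = -(J ∘ I)), and J' = x J + √(1 - x²) I. -/
open RealInnerProductSpace

/-!
An endomorphism `J` with `J² = -1` preserves a bilinear form if and only if it is skew-adjoint for
it. Unlike the orthogonal endomorphisms, the skew-adjoint ones form a submodule, so `J' - x J` is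
again skew-adjoint. Since `J' J + J J' = -2x`, it anticommutes with `J` and squares to the scalar
`-(1 - x²)`; dividing by `√(1 - x²)` makes the square `-1`, and skew-adjointness turns back into
orthogonality.
-/

section Algebra

variable {R A : Type*} [CommRing R] [Ring A] [Algebra R A] {a b : A} {x : R}

theorem sub_smul_mul_eq_neg_mul_sub_smul (ha : a * a = -1)
    (hab : b * a + a * b = -((2 * x) • 1)) :
    (b - x • a) * a = -(a * (b - x • a)) := by
  have anticommutator_eq_zero : (b - x • a) * a + a * (b - x • a) = 0 := by
    calc (b - x • a) * a + a * (b - x • a)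
        = (b * a + a * b) - (2 * x) • (a * a) := by
          simp only [sub_mul, mul_sub, smul_mul_assoc, mul_smul_comm]; module
      _ = 0 := by rw [hab, ha]; module
  exact eq_neg_of_add_eq_zero_left anticommutator_eq_zero

theorem sub_smul_mul_self_eq_neg_smul_one (ha : a * a = -1) (hb : b * b = -1)
    (hab : b * a + a * b = -((2 * x) • 1)) :
    (b - x • a) * (b - x • a) = -((1 - x ^ 2) • 1) :=
  calc (b - x • a) * (b - x • a)
      = b * b - x • (b * a + a * b) + x ^ 2 • (a * a) := by
        simp only [sub_mul, mul_sub, smul_mul_assoc, mul_smul_comm]; module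
    _ = -((1 - x ^ 2) • 1) := by rw [ha, hb, hab]; module

end Algebra

section BilinForm

variable {R V : Type*} [CommRing R] [AddCommGroup V] [Module R V]
  {B : LinearMap.BilinForm R V}

theorem isOrthogonal_iff_isSkewAdjoint_of_mul_self_eq_neg_one {J : Module.End R V}
    (hJ : J * J = -1) : B.IsOrthogonal J ↔ B.IsSkewAdjoint J := by
  have apply_apply (v : V) : J (J v) = -v := LinearMap.congr_fun hJ v
  constructor
  · intro h v w
    calc B (J v) w = -B (J v) (J (J w)) := by rw [apply_apply, map_neg, neg_neg]
      _ = B v (-J w) := by rw [h, map_neg]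
  · intro h v w
    calc B (J v) (J w) = B v (-J (J w)) := h v (J w)
      _ = B v w := by rw [apply_apply, neg_neg]

theorem stmt_9_general {J J' : Module.End R V}
    (hJ : J * J = -1) (hJo : B.IsOrthogonal J)
    (hJ' : J' * J' = -1) (hJ'o : B.IsOrthogonal J')
    {x s c : R} (hs : s ^ 2 = 1 - x ^ 2) (hsc : s * c = 1)
    (hcomm : J' * J + J * J' = -((2 * x) • 1)) :
    let I : Module.End R V := c • (J' - x • J)
    I * I = -1 ∧ B.IsOrthogonal I ∧ I * J = -(J * I) ∧ J' = x • J + s • I := by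
  intro I
  have I_mul_self : I * I = -1 := by
    have hc : c * c * (1 - x ^ 2) = 1 := by
      rw [← hs]; linear_combination (s * c + 1) * hsc
    rw [smul_mul_smul_comm, sub_smul_mul_self_eq_neg_smul_one hJ hJ' hcomm, smul_neg, smul_smul,
      hc, one_smul]
  have I_skewAdjoint : B.IsSkewAdjoint I := by
    rw [← LinearMap.mem_skewAdjointSubmodule]
    refine Submodule.smul_mem _ c (Submodule.sub_mem _ ?_ (Submodule.smul_mem _ x ?_)) <;>
      rw [LinearMap.mem_skewAdjointSubmodule]
    · exact (isOrthogonal_iff_isSkewAdjoint_of_mul_self_eq_neg_one hJ').mp hJ'o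
    · exact (isOrthogonal_iff_isSkewAdjoint_of_mul_self_eq_neg_one hJ).mp hJo
  refine ⟨I_mul_self,
    (isOrthogonal_iff_isSkewAdjoint_of_mul_self_eq_neg_one I_mul_self).mpr I_skewAdjoint, ?_, ?_⟩
  · rw [smul_mul_assoc, sub_smul_mul_eq_neg_mul_sub_smul hJ hcomm, mul_smul_comm, smul_neg]
  · rw [smul_smul, hsc, one_smul, add_sub_cancel]

end BilinForm

theorem sqrt_mul_rpow_neg_half {y : ℝ} (hy : 0 < y) : √y * y ^ (-(1 / 2 : ℝ)) = 1 := by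
  rw [Real.rpow_neg hy.le, ← Real.sqrt_eq_rpow, mul_inv_cancel₀ (Real.sqrt_ne_zero'.mpr hy)]

/-- If `J`, `J'` are orthogonal complex structures with
`J' ∘ J + J ∘ J' = -2x • id` and `x² < 1`, then
`I := (1 - x²)^(-1/2) • (J' - x J)` is an orthogonal complex structure
anticommuting with `J`, and `J' = x J + √(1 - x²) I`. -/
theorem stmt_9 {V : Type*} [NormedAddCommGroup V] [InnerProductSpace ℝ V]
    (J J' : V →ₗ[ℝ] V)
    (hJ2 : J ∘ₗ J = -LinearMap.id) (hJo : ∀ v w : V, ⟪J v, J w⟫ = ⟪v, w⟫)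
    (hJ'2 : J' ∘ₗ J' = -LinearMap.id) (hJ'o : ∀ v w : V, ⟪J' v, J' w⟫ = ⟪v, w⟫)
    (x : ℝ) (hx : x ^ 2 < 1)
    (hcomm : J' ∘ₗ J + J ∘ₗ J' = -((2 * x) • LinearMap.id)) :
    let I : V →ₗ[ℝ] V := ((1 - x ^ 2) ^ (-(1 / 2 : ℝ))) • (J' - x • J)
    (I ∘ₗ I = -LinearMap.id) ∧
    (∀ v w : V, ⟪I v, I w⟫ = ⟪v, w⟫) ∧
    (I ∘ₗ J = -(J ∘ₗ I)) ∧
    J' = x • J + (Real.sqrt (1 - x ^ 2)) • I := by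
  have hpos : 0 < 1 - x ^ 2 := sub_pos.mpr hx
  exact stmt_9_general (B := innerₗ V) hJ2 hJo hJ'2 hJ'o (Real.sq_sqrt hpos.le)
    (sqrt_mul_rpow_neg_half hpos) hcomm
end

section
/- Let V be a real inner product space, let J and J' be orthogonal complex structures on V, and let x be a real number with x² = 1 such that J' ∘ J + J ∘ J' = -2x • id. Then J' = x J; in particular J' = J or J' = -J. -/
open RealInnerProductSpace

/-!
If `J` and `J'` do not increase norms, then neither do `J' ∘ J` and `J ∘ J'`, whose mean is
`-x • id` with `|x| = 1`. In a strictly convex space a point of the sphere is the mean of two points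
of the ball only if both are equal to it, so `J' ∘ J = -x • id`. Composing with `J⁻¹ = -J` on the
right gives `J' = x • J`.
-/

section StrictConvex

variable {E : Type*} [NormedAddCommGroup E] [NormedSpace ℝ E] [StrictConvexSpace ℝ E]

theorem eq_of_norm_le_of_add_eq_two_smul {a b c : E} (ha : ‖a‖ ≤ ‖c‖) (hb : ‖b‖ ≤ ‖c‖)
    (habc : a + b = (2 : ℝ) • c) : a = c := by
  have norm_add : ‖a + b‖ = 2 * ‖c‖ := by rw [habc, norm_smul, Real.norm_two]
  have triangle : ‖a + b‖ ≤ ‖a‖ + ‖b‖ := norm_add_le a b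
  have hab : a = b := eq_of_norm_eq_of_norm_add_eq (by linarith) (by linarith)
  rw [← hab, ← two_smul ℝ] at habc
  exact smul_right_injective E two_ne_zero habc

theorem eq_smul_id_of_norm_le_of_add_eq {S T : E →ₗ[ℝ] E} {c : ℝ} (hc : 1 ≤ |c|)
    (hS : ∀ v, ‖S v‖ ≤ ‖v‖) (hT : ∀ v, ‖T v‖ ≤ ‖v‖)
    (hST : S + T = (2 * c) • LinearMap.id) : S = c • LinearMap.id := by
  ext v
  have norm_le : ‖v‖ ≤ ‖c • v‖ := by
    rw [norm_smul, Real.norm_eq_abs]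
    exact le_mul_of_one_le_left (norm_nonneg v) hc
  refine eq_of_norm_le_of_add_eq_two_smul ((hS v).trans norm_le) ((hT v).trans norm_le) ?_
  exact (LinearMap.congr_fun hST v).trans (mul_smul 2 c v)

theorem stmt_10_general (J J' : E →ₗ[ℝ] E) (hJ2 : J ∘ₗ J = -LinearMap.id)
    (hJ : ∀ v, ‖J v‖ ≤ ‖v‖) (hJ' : ∀ v, ‖J' v‖ ≤ ‖v‖) (x : ℝ) (hx : x ^ 2 = 1)
    (hcomm : J' ∘ₗ J + J ∘ₗ J' = -((2 * x) • LinearMap.id)) :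
    J' = x • J ∧ (J' = J ∨ J' = -J) := by
  have hJ'J : J' ∘ₗ J = (-x) • LinearMap.id :=
    eq_smul_id_of_norm_le_of_add_eq (by rw [abs_neg, ← one_le_sq_iff_one_le_abs, hx])
      (fun v ↦ (hJ' (J v)).trans (hJ v)) (fun v ↦ (hJ (J' v)).trans (hJ' v))
      (by rw [hcomm, mul_neg, neg_smul])
  have hJ'_eq : J' = x • J := calc
    J' = -((J' ∘ₗ J) ∘ₗ J) := by
      rw [LinearMap.comp_assoc, hJ2, LinearMap.comp_neg, LinearMap.comp_id, neg_neg]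
    _ = x • J := by rw [hJ'J, LinearMap.smul_comp, LinearMap.id_comp, neg_smul, neg_neg]
  refine ⟨hJ'_eq, (sq_eq_one_iff.mp hx).imp ?_ ?_⟩
  · rintro rfl
    rw [hJ'_eq, one_smul]
  · rintro rfl
    rw [hJ'_eq, neg_one_smul]

end StrictConvex

/-- If `J`, `J'` are orthogonal complex structures with
`J' ∘ J + J ∘ J' = -2x • id` and `x² = 1`, then `J' = x J`; in particular
`J' = J` or `J' = -J`. -/
theorem stmt_10 {V : Type*} [NormedAddCommGroup V] [InnerProductSpace ℝ V]
    (J J' : V →ₗ[ℝ] V)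
    (hJ2 : J ∘ₗ J = -LinearMap.id) (hJo : ∀ v w : V, ⟪J v, J w⟫ = ⟪v, w⟫)
    (hJ'2 : J' ∘ₗ J' = -LinearMap.id) (hJ'o : ∀ v w : V, ⟪J' v, J' w⟫ = ⟪v, w⟫)
    (x : ℝ) (hx : x ^ 2 = 1)
    (hcomm : J' ∘ₗ J + J ∘ₗ J' = -((2 * x) • LinearMap.id)) :
    J' = x • J ∧ (J' = J ∨ J' = -J) :=
  stmt_10_general J J' hJ2 (fun v ↦ ((J.isometryOfInner hJo).norm_map v).le)
    (fun v ↦ ((J'.isometryOfInner hJ'o).norm_map v).le) x hx hcomm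
end
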